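/- Let f, v, p : ℝ → ℝ be smooth 2π-periodic functions satisfying on all of ℝ the system (p - 2f)' = 0, -f'' + v f' - f² - v² - 2p = 0, v' = 0. Then either v ≡ 0, or f is constant (f' ≡ 0); in the latter case v, f, p are all constant and satisfy f² + v² + 2p = 0. -/

import Mathlib

/-!
The third equation makes `v` a constant `c` and the first gives `p = 2 f + k`, so the system
becomes the single equation `f'' = c f' - f² - 4 f - c² - 2 k`: a Newtonian oscillator with a
linear (anti-)friction term. If `c ≠ 0`, the rescaled energy
`(f'² / 2 + f³ / 3 + 2 f² + (c² + 2 k) f) / c` has derivative `f'² ≥ 0`, hence is monotone; being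
periodic, it is constant, which forces `f' = 0`.
-/

noncomputable section

open Real

theorem eq_of_monotone_of_periodic {g : ℝ → ℝ} {T : ℝ} (hT : 0 < T) (hg : Monotone g)
    (hper : Function.Periodic g T) (x y : ℝ) : g x = g y := by
  have key : ∀ a b : ℝ, g b ≤ g a := by
    intro a b
    obtain ⟨n, hn⟩ := exists_nat_gt ((b - a) / T)
    have hb : b ≤ a + n * T := by
      have := (div_lt_iff₀ hT).1 hn
      linarith
    exact (hg hb).trans_eq (hper.nat_mul n a)
  exact le_antisymm (key y x) (key x y)

theorem planar_homogeneous_system_dichotomy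
    (f v p : ℝ → ℝ)
    (hf : ContDiff ℝ (⊤ : ℕ∞) f) (hv : ContDiff ℝ (⊤ : ℕ∞) v) (hp : ContDiff ℝ (⊤ : ℕ∞) p)
    (hfper : Function.Periodic f (2 * π))
    (hvper : Function.Periodic v (2 * π))
    (hpper : Function.Periodic p (2 * π))
    (h1 : ∀ θ : ℝ, deriv (fun t => p t - 2 * f t) θ = 0)
    (h2 : ∀ θ : ℝ, -(deriv (deriv f) θ) + v θ * deriv f θ
      - f θ ^ 2 - v θ ^ 2 - 2 * p θ = 0)
    (h3 : ∀ θ : ℝ, deriv v θ = 0) :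
    (∀ θ : ℝ, v θ = 0) ∨
      ((∀ θ : ℝ, deriv f θ = 0) ∧
        (∀ θ θ' : ℝ, f θ = f θ' ∧ v θ = v θ' ∧ p θ = p θ') ∧
        (∀ θ : ℝ, f θ ^ 2 + v θ ^ 2 + 2 * p θ = 0)) := by
  have hfd : Differentiable ℝ f := hf.differentiable (by simp)
  have hvd : Differentiable ℝ v := hv.differentiable (by simp)
  have hpd : Differentiable ℝ p := hp.differentiable (by simp)
  have hf'd : Differentiable ℝ (deriv f) :=
    ((contDiff_infty_iff_deriv.1 hf).2).differentiable (by simp)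
  have hvc : ∀ x y, v x = v y := is_const_of_deriv_eq_zero hvd h3
  have hpc : ∀ x y, p x - 2 * f x = p y - 2 * f y :=
    is_const_of_deriv_eq_zero (hpd.sub (hfd.const_mul 2)) h1
  by_cases hc : v 0 = 0
  · exact Or.inl fun θ => (hvc θ 0).trans hc
  right
  set c := v 0
  set k := p 0 - 2 * f 0
  have hf'per : ∀ x, deriv f (x + 2 * π) = deriv f x := by
    intro x
    rw [← deriv_comp_add_const]
    exact congrArg (fun h => deriv h x) (funext hfper)
  let E : ℝ → ℝ := fun x =>
    (deriv f x ^ 2 / 2 + f x ^ 3 / 3 + 2 * f x ^ 2 + (c ^ 2 + 2 * k) * f x) / c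
  have hE : ∀ x, HasDerivAt E (deriv f x ^ 2) x := by
    intro x
    have a := (hfd x).hasDerivAt
    have b := (hf'd x).hasDerivAt
    have e := (((((b.pow 2).div_const 2).add ((a.pow 3).div_const 3)).add
      ((a.pow 2).const_mul 2)).add (a.const_mul (c ^ 2 + 2 * k))).div_const c
    refine e.congr_deriv ?_
    have hode := h2 x
    have hp' := hpc x 0
    rw [hvc x 0] at hode
    change -(deriv (deriv f) x) + c * deriv f x - f x ^ 2 - c ^ 2 - 2 * p x = 0 at hode
    change p x - 2 * f x = k at hp'
    rw [div_eq_iff hc]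
    push_cast
    -- `f'` times the oscillator equation, with `p` eliminated through `p = 2 f + k`
    linear_combination (-deriv f x) * hode - 2 * deriv f x * hp'
  have hEmono : Monotone E := monotone_of_deriv_nonneg (fun x => (hE x).differentiableAt)
    fun x => by rw [(hE x).deriv]; positivity
  have hEper : Function.Periodic E (2 * π) := by
    intro x
    simp only [E, hf'per x, hfper x]
  have hEconst := eq_of_monotone_of_periodic (by positivity) hEmono hEper
  have hf0 : ∀ θ, deriv f θ = 0 := by
    intro θ
    have hconst : E = fun _ => E 0 := funext fun x => hEconst x 0
    have hd := (hE θ).deriv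
    rw [hconst, deriv_const] at hd
    exact pow_eq_zero_iff (two_ne_zero) |>.1 hd.symm
  have hfc : ∀ x y, f x = f y := is_const_of_deriv_eq_zero hfd hf0
  refine ⟨hf0, fun x y => ⟨hfc x y, hvc x y, ?_⟩, fun x => ?_⟩
  · linarith [hpc x y, hfc x y]
  · have hode := h2 x
    have hf00 : deriv (deriv f) x = 0 := by
      rw [show deriv f = fun _ => 0 from funext hf0, deriv_const]
    rw [hf00, hf0 x] at hode
    linarith
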